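/- Let p be a prime, n ≥ 1, and f ∈ 𝔽_p[x₁,…,xₙ] a polynomial of total degree at most n. Suppose λ is a weighting such that f has a unique term of maximal λ-weight, and that term is c·x₁x₂⋯xₙ with c ≠ 0 (so that g ↦ Tr(f^{p−1}·g) is a Frobenius splitting). If I is an ideal of 𝔽_p[x₁,…,xₙ] compatibly split by g ↦ Tr(f^{p−1}·g), then the initial ideal init_λ(I) is a squarefree monomial (Stanley–Reisner) ideal; in particular init_λ(I) and I are radical. -/

import Mathlib

open MvPolynomial

/-- The near-splitting `Tr` on `𝔽_p[x₁,…,xₙ]`: on a monomial `∏ xᵢ^{eᵢ}` it gives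
`∏ xᵢ^{(eᵢ+1)/p - 1}` if `p ∣ eᵢ + 1` for all `i`, and `0` otherwise, extended
`𝔽_p`-linearly (note that `c^{1/p} = c` for `c ∈ 𝔽_p`). -/
noncomputable def Tr (p n : ℕ) (g : MvPolynomial (Fin n) (ZMod p)) :
    MvPolynomial (Fin n) (ZMod p) :=
  ∑ m ∈ g.support,
    if ∀ i, p ∣ (m i + 1) then
      monomial (Finsupp.equivFunOnFinite.symm fun i => (m i + 1) / p - 1) (g.coeff m)
    else 0

/-- A Frobenius splitting is an additive map `φ` with `φ (a^p * b) = a * φ b` and `φ 1 = 1`. -/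
def IsFrobeniusSplitting (p : ℕ) {R : Type*} [CommRing R] (φ : R → R) : Prop :=
  (∀ a b : R, φ (a + b) = φ a + φ b) ∧ (∀ a b : R, φ (a ^ p * b) = a * φ b) ∧ φ 1 = 1

/-- The `λ`-weight of an exponent vector `m` is `∑ᵢ λᵢ·mᵢ`. -/
def wtOf {n : ℕ} (lam : Fin n → ℕ) (m : Fin n →₀ ℕ) : ℕ := ∑ i, lam i * m i

/-- The leading form `init_λ(g)`: the sum of the terms of `g` of maximal `λ`-weight. -/
noncomputable def initForm {R : Type*} [CommRing R] {n : ℕ} (lam : Fin n → ℕ)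
    (g : MvPolynomial (Fin n) R) : MvPolynomial (Fin n) R :=
  ∑ m ∈ g.support.filter (fun m => ∀ m' ∈ g.support, wtOf lam m' ≤ wtOf lam m),
    MvPolynomial.monomial m (g.coeff m)

/-- The initial ideal `init_λ(I)`, spanned by the leading forms of the nonzero
elements of `I`. -/
noncomputable def initIdeal {R : Type*} [CommRing R] {n : ℕ} (lam : Fin n → ℕ)
    (I : Ideal (MvPolynomial (Fin n) R)) : Ideal (MvPolynomial (Fin n) R) :=
  Ideal.span {h | ∃ g ∈ I, g ≠ 0 ∧ initForm lam g = h}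

/-- A squarefree monomial (Stanley–Reisner) ideal: one generated by a set of squarefree
monomials `∏_{i ∈ s} xᵢ`. -/
def IsSqfreeMonomialIdeal {R : Type*} [CommRing R] {n : ℕ}
    (I : Ideal (MvPolynomial (Fin n) R)) : Prop :=
  ∃ S : Set (Finset (Fin n)),
    I = Ideal.span ((fun s : Finset (Fin n) => ∏ i ∈ s, (X i : MvPolynomial (Fin n) R)) '' S)

/-!
Write `X = x₁⋯xₙ` and let `contract p` send `x ^ (p • m)` to `x ^ m` and kill all other monomials.
Then `X * Tr g = contract p (X * g)`, whence `Tr (X ^ (p - 1) * g) = contract p g`. As the leading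
form of `f ^ (p - 1)` is `X ^ (p - 1)`, the maps `g ↦ Tr (f ^ (p - 1) * g)` and `contract p` agree
in top weight. Hence compatibility of `I` with the first makes `init_λ(I)` stable under the second.

Stability under contraction forces an ideal `J` to be a squarefree monomial ideal: for `g ∈ J` and
`q` a power of `p` exceeding all exponents of `g`, and for a term `c x^m` of `g` with support `s`,
multiplying `g` by `∏ i ∈ s, x i ^ (q - m i)` makes this term the only one surviving `contract q`,
so `c ∏ i ∈ s, x i` lies in `J`.
-/

theorem IsFrobeniusSplitting.isRadical {R : Type*} [CommRing R] {p : ℕ} {φ : R → R}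
    (hφ : IsFrobeniusSplitting p φ) (hp : 1 < p) {I : Ideal R} (hI : ∀ g ∈ I, φ g ∈ I) :
    I.IsRadical := by
  refine (Ideal.isRadical_iff_pow_one_lt p hp).mpr fun g hg ↦ ?_
  have hφg : φ (g ^ p) = g := by rw [← mul_one (g ^ p), hφ.2.1, hφ.2.2, mul_one]
  exact hφg ▸ hI _ hg

section Contract

variable {σ R : Type*} [CommSemiring R]

open Classical in
/-- The contraction operator, sending `x ^ (q • m)` to `x ^ m` and every monomial whose exponent
vector is not divisible by `q` to zero. For prime `q` it is the Frobenius splitting of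
`𝔽_q[x₁,…,xₙ]` given by `(x₁⋯xₙ)^(q-1)`; its compatible ideals are the squarefree monomial
ideals. -/
noncomputable def contract (q : ℕ) : MvPolynomial σ R →ₗ[R] MvPolynomial σ R :=
  (basisMonomials σ R).constr R fun m ↦
    if ∀ i, q ∣ m i then monomial (m.mapRange (· / q) (Nat.zero_div q)) 1 else 0

open Classical in
theorem contract_monomial (q : ℕ) (m : σ →₀ ℕ) (c : R) :
    contract q (monomial m c) =
      if ∀ i, q ∣ m i then monomial (m.mapRange (· / q) (Nat.zero_div q)) c else 0 := by
  have hm : contract q (monomial m (1 : R)) = _ := (basisMonomials σ R).constr_basis R _ m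
  rw [← mul_one c, ← smul_eq_mul, ← smul_monomial, map_smul, hm]
  split_ifs <;> simp [smul_monomial]

theorem coeff_contract {q : ℕ} (hq : q ≠ 0) (g : MvPolynomial σ R) (k : σ →₀ ℕ) :
    coeff k (contract q g) = coeff (q • k) g := by
  classical
  induction g using MvPolynomial.induction_on' with
  | monomial m c =>
    rw [contract_monomial, coeff_monomial]
    split_ifs with hdvd hmk hmk
    · rw [coeff_monomial, if_pos]
      ext i
      simp [hmk, hq]
    · rw [coeff_monomial, if_neg]
      rintro rfl
      exact hmk (Finsupp.ext fun i ↦ by simp [Nat.mul_div_cancel' (hdvd i)])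
    · exact absurd (fun i ↦ by simp [hmk]) hdvd
    · rfl
  | add a b ha hb => rw [map_add, coeff_add, coeff_add, ha, hb]

theorem contract_contract {q r : ℕ} (hq : q ≠ 0) (hr : r ≠ 0) (g : MvPolynomial σ R) :
    contract q (contract r g) = contract (r * q) g := by
  ext k
  rw [coeff_contract hq, coeff_contract hr, coeff_contract (mul_ne_zero hr hq), mul_smul]

theorem contract_expand_mul {q : ℕ} (hq : q ≠ 0) (a b : MvPolynomial σ R) :
    contract q (expand q a * b) = a * contract q b := by
  classical
  induction a using MvPolynomial.induction_on' with
  | monomial m c =>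
    ext k
    have hle : q • m ≤ q • k ↔ m ≤ k := smul_le_smul_iff_of_pos_left (Nat.pos_of_ne_zero hq)
    simp only [expand_monomial, coeff_contract hq, coeff_monomial_mul', hle]
    congr! 3
    ext i
    simp [Nat.mul_sub]
  | add a a' ha ha' => rw [map_add, add_mul, map_add, ha, ha', add_mul]

theorem contract_one (q : ℕ) : contract q (1 : MvPolynomial σ R) = 1 :=
  (contract_monomial q 0 1).trans (by simp)

theorem isFrobeniusSplitting_contract {p : ℕ} (hp : p.Prime) :
    IsFrobeniusSplitting p (contract p : MvPolynomial σ (ZMod p) → MvPolynomial σ (ZMod p)) := by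
  have := Fact.mk hp
  exact ⟨map_add _, fun a b ↦ by rw [← expand_zmod, contract_expand_mul hp.ne_zero],
    contract_one p⟩

theorem contract_monomial_mul_eq_monomial {q : ℕ} {g : MvPolynomial σ R}
    (hg : ∀ m ∈ g.support, ∀ i, m i < q) {m t u : σ →₀ ℕ} (hm : ∀ i, m i < q)
    (htm : t + m = q • u) (hq : q ≠ 0) :
    contract q (monomial t 1 * g) = monomial u (coeff m g) := by
  classical
  ext k
  rw [coeff_contract hq, coeff_monomial]
  split_ifs with huk
  · rw [← huk, ← htm, coeff_monomial_mul, one_mul]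
  · rw [coeff_monomial_mul', one_mul, ite_eq_right_iff]
    intro htk
    obtain ⟨m', hm'⟩ := exists_add_of_le htk
    rw [hm', add_tsub_cancel_left]
    by_contra hne
    apply huk
    ext i
    have hi : q * u i + m' i = q * k i + m i := by
      have hu := DFunLike.congr_fun htm i
      have hk := DFunLike.congr_fun hm' i
      simp only [Finsupp.add_apply, Finsupp.smul_apply, smul_eq_mul] at hu hk
      omega
    have hdiv := congrArg (· / q) hi
    simpa [Nat.mul_add_div (Nat.pos_of_ne_zero hq), Nat.div_eq_of_lt (hm i),
      Nat.div_eq_of_lt (hg m' (mem_support_iff.mpr hne) i)] using hdiv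

end Contract

section Sqfree

theorem contract_pow_mem {σ R : Type*} [CommSemiring R] {q : ℕ} (hq : q ≠ 0)
    {J : Ideal (MvPolynomial σ R)} (hJ : ∀ g ∈ J, contract q g ∈ J) (e : ℕ)
    {g : MvPolynomial σ R} (hg : g ∈ J) : contract (q ^ e) g ∈ J := by
  induction e with
  | zero =>
    convert hg
    ext k
    simp [coeff_contract]
  | succ e ih =>
    rw [pow_succ, ← contract_contract hq (pow_ne_zero e hq)]
    exact hJ _ ih

theorem prod_X_support_mem_of_contract_mem {σ K : Type*} [Field K] {q : ℕ} (hq : 1 < q)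
    {J : Ideal (MvPolynomial σ K)} (hJ : ∀ g ∈ J, contract q g ∈ J) {g : MvPolynomial σ K}
    (hg : g ∈ J) {m : σ →₀ ℕ} (hm : m ∈ g.support) : ∏ i ∈ m.support, X i ∈ J := by
  classical
  have hq0 : q ≠ 0 := (zero_lt_one.trans hq).ne'
  let Q := q ^ g.totalDegree
  have hlt : ∀ m' ∈ g.support, ∀ i, m' i < Q := fun m' hm' i ↦
    ((monomial_le_degreeOf i hm').trans (degreeOf_le_totalDegree g i)).trans_lt
      (Nat.lt_pow_self hq)
  let u : σ →₀ ℕ := ∑ i ∈ m.support, Finsupp.single i 1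
  have hmu : m ≤ Q • u := fun i ↦ by
    have := hlt m hm i
    by_cases hi : m i = 0
    · simp [hi]
    · simpa [u, Finsupp.finsetSum_apply, Finsupp.single_apply, hi] using this.le
  have hisolate : contract Q (monomial (Q • u - m) 1 * g) = monomial u (coeff m g) :=
    contract_monomial_mul_eq_monomial hlt (hlt m hm) (tsub_add_cancel_of_le hmu)
      (pow_ne_zero _ hq0)
  have hmem : monomial u (coeff m g) ∈ J :=
    hisolate ▸ contract_pow_mem hq0 hJ _ (J.mul_mem_left _ hg)
  have hprod : ∏ i ∈ m.support, X i = C (coeff m g)⁻¹ * monomial u (coeff m g) := by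
    rw [C_mul_monomial, inv_mul_cancel₀ (mem_support_iff.mp hm)]
    exact (monomial_sum_one m.support fun i ↦ Finsupp.single i 1).symm
  exact hprod ▸ J.mul_mem_left _ hmem

theorem isSqfreeMonomialIdeal_of_prod_X_support_mem {R : Type*} [CommRing R] {n : ℕ}
    {J : Ideal (MvPolynomial (Fin n) R)}
    (hJ : ∀ g ∈ J, ∀ m ∈ g.support, ∏ i ∈ m.support, X i ∈ J) : IsSqfreeMonomialIdeal J := by
  refine ⟨{s | ∏ i ∈ s, X i ∈ J}, le_antisymm (fun g hg ↦ ?_) ?_⟩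
  · rw [g.as_sum]
    refine Ideal.sum_mem _ fun m hm ↦ ?_
    have hdvd : ∏ i ∈ m.support, X i ∣ monomial m (coeff m g) := by
      rw [monomial_eq]
      exact (Finset.prod_dvd_prod_of_dvd _ _ fun i hi ↦
        dvd_pow_self _ (Finsupp.mem_support_iff.mp hi)).mul_left _
    exact Ideal.mem_of_dvd _ hdvd (Ideal.subset_span ⟨_, hJ g hg m hm, rfl⟩)
  · rw [Ideal.span_le]
    rintro _ ⟨s, hs, rfl⟩
    exact hs

end Sqfree

section WeightedDegree

variable {σ R M : Type*} [CommSemiring R] [AddCommMonoid M] [SemilatticeSup M] [OrderBot M]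
  (w : σ → M)

theorem weightedTotalDegree_le_of_isWeightedHomogeneous {φ : MvPolynomial σ R} {a : M}
    (hφ : IsWeightedHomogeneous w φ a) : weightedTotalDegree w φ ≤ a :=
  Finset.sup_le fun _ hd ↦ (hφ (mem_support_iff.mp hd)).le

variable [IsOrderedCancelAddMonoid M]

theorem weightedTotalDegree_mul_le {φ ψ : MvPolynomial σ R} {a b : M}
    (hφ : weightedTotalDegree w φ ≤ a) (hψ : weightedTotalDegree w ψ ≤ b) :
    weightedTotalDegree w (φ * ψ) ≤ a + b := by
  classical
  refine Finset.sup_le fun d hd ↦ ?_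
  obtain ⟨i, hi, j, hj, rfl⟩ := Finset.mem_add.mp (support_mul φ ψ hd)
  rw [map_add]
  exact add_le_add ((le_weightedTotalDegree w hi).trans hφ) ((le_weightedTotalDegree w hj).trans hψ)

theorem weightedTotalDegree_pow_le {φ : MvPolynomial σ R} {a : M}
    (hφ : weightedTotalDegree w φ ≤ a) (k : ℕ) : weightedTotalDegree w (φ ^ k) ≤ k • a := by
  induction k with
  | zero =>
    rw [pow_zero, zero_smul]
    exact weightedTotalDegree_le_of_isWeightedHomogeneous w (isWeightedHomogeneous_one R w)
  | succ k ih =>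
    rw [pow_succ, succ_nsmul]
    exact weightedTotalDegree_mul_le w ih hφ

theorem weightedHomogeneousComponent_add_mul {φ ψ : MvPolynomial σ R} {a b : M}
    (hφ : weightedTotalDegree w φ ≤ a) (hψ : weightedTotalDegree w ψ ≤ b) :
    weightedHomogeneousComponent w (a + b) (φ * ψ) =
      weightedHomogeneousComponent w a φ * weightedHomogeneousComponent w b ψ := by
  classical
  ext d
  simp only [coeff_weightedHomogeneousComponent, coeff_mul, ite_zero_mul_ite_zero,
    Finset.ite_sum_zero]
  refine Finset.sum_congr rfl fun ij hij ↦ ?_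
  by_cases hi : coeff ij.1 φ = 0
  · simp only [hi, zero_mul, ite_self]
  by_cases hj : coeff ij.2 ψ = 0
  · simp only [hj, mul_zero, ite_self]
  have hi_le := (le_weightedTotalDegree w (mem_support_iff.mpr hi)).trans hφ
  have hj_le := (le_weightedTotalDegree w (mem_support_iff.mpr hj)).trans hψ
  refine if_congr ?_ rfl rfl
  rw [← Finset.HasAntidiagonal.mem_antidiagonal.mp hij, map_add,
    add_eq_add_iff_eq_and_eq hi_le hj_le]

theorem weightedHomogeneousComponent_nsmul_pow {φ : MvPolynomial σ R} {a : M}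
    (hφ : weightedTotalDegree w φ ≤ a) (k : ℕ) :
    weightedHomogeneousComponent w (k • a) (φ ^ k) = weightedHomogeneousComponent w a φ ^ k := by
  induction k with
  | zero =>
    rw [zero_smul, pow_zero, pow_zero]
    exact (isWeightedHomogeneous_one R w).weightedHomogeneousComponent_same
  | succ k ih =>
    rw [succ_nsmul, pow_succ, pow_succ, weightedHomogeneousComponent_add_mul w
      (weightedTotalDegree_pow_le w hφ k) hφ, ih]

end WeightedDegree

section WeightedContract

variable {σ R : Type*} [CommSemiring R] (w : σ → ℕ) {q : ℕ}

theorem weightedHomogeneousComponent_contract (hq : q ≠ 0) (d : ℕ) (g : MvPolynomial σ R) :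
    weightedHomogeneousComponent w d (contract q g) =
      contract q (weightedHomogeneousComponent w (q * d) g) := by
  classical
  ext k
  simp only [coeff_weightedHomogeneousComponent, coeff_contract hq, map_nsmul, smul_eq_mul,
    mul_right_inj' hq]

theorem contract_eq_zero_of_not_dvd (hq : q ≠ 0) {d : ℕ} (hd : ¬ q ∣ d) {g : MvPolynomial σ R}
    (hg : IsWeightedHomogeneous w g d) : contract q g = 0 := by
  ext k
  rw [coeff_contract hq, coeff_zero]
  refine hg.coeff_eq_zero _ fun h ↦ hd ?_
  rw [← h, map_nsmul, smul_eq_mul]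
  exact dvd_mul_right _ _

end WeightedContract

section InitialIdeal

variable {R : Type*} [CommRing R] {n : ℕ} {lam : Fin n → ℕ}

theorem weight_eq_wtOf (lam : Fin n → ℕ) (m : Fin n →₀ ℕ) : Finsupp.weight lam m = wtOf lam m := by
  simp [wtOf, Finsupp.weight_apply, Finsupp.sum_fintype, mul_comm]

theorem initForm_eq_monomial {g : MvPolynomial (Fin n) R} {m : Fin n →₀ ℕ} (hm : m ∈ g.support)
    (huniq : ∀ m' ∈ g.support, m' ≠ m → wtOf lam m' < wtOf lam m) :
    initForm lam g = monomial m (coeff m g) := by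
  have hfilter : g.support.filter (fun a ↦ ∀ m' ∈ g.support, wtOf lam m' ≤ wtOf lam a) = {m} := by
    refine Finset.eq_singleton_iff_unique_mem.mpr ⟨Finset.mem_filter.mpr ⟨hm, fun m' hm' ↦ ?_⟩,
      fun a ha ↦ ?_⟩
    · obtain rfl | hne := eq_or_ne m' m
      exacts [le_rfl, (huniq m' hm' hne).le]
    · by_contra hne
      obtain ⟨ha, hmax⟩ := Finset.mem_filter.mp ha
      exact (huniq a ha hne).not_ge (hmax m hm)
  rw [initForm, hfilter, Finset.sum_singleton]

theorem initForm_eq_weightedHomogeneousComponent (lam : Fin n → ℕ) (g : MvPolynomial (Fin n) R) :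
    initForm lam g = weightedHomogeneousComponent lam (weightedTotalDegree lam g) g := by
  rw [weightedHomogeneousComponent_apply, initForm]
  refine Finset.sum_congr (Finset.filter_congr fun m hm ↦ ?_) fun _ _ ↦ rfl
  simp only [← weight_eq_wtOf]
  exact ⟨fun h ↦ (le_weightedTotalDegree lam hm).antisymm (Finset.sup_le h),
    fun h m' hm' ↦ h ▸ le_weightedTotalDegree lam hm'⟩

theorem weightedTotalDegree_eq_of_initForm_eq_monomial {g : MvPolynomial (Fin n) R}
    {m : Fin n →₀ ℕ} {c : R} (hc : c ≠ 0) (hg : initForm lam g = monomial m c) :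
    weightedTotalDegree lam g = Finsupp.weight lam m := by
  have hm : coeff m (initForm lam g) ≠ 0 := by rwa [hg, coeff_monomial, if_pos rfl]
  rw [initForm_eq_weightedHomogeneousComponent] at hm
  exact (weightedHomogeneousComponent_isWeightedHomogeneous _ g hm).symm

theorem weightedHomogeneousComponent_mem_initIdeal {I : Ideal (MvPolynomial (Fin n) R)}
    {g : MvPolynomial (Fin n) R} (hg : g ∈ I) {d : ℕ} (hd : weightedTotalDegree lam g ≤ d) :
    weightedHomogeneousComponent lam d g ∈ initIdeal lam I := by
  obtain rfl | hlt := hd.eq_or_lt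
  · obtain rfl | hg0 := eq_or_ne g 0
    · rw [map_zero]
      exact Ideal.zero_mem _
    · exact Ideal.subset_span ⟨g, hg, hg0, initForm_eq_weightedHomogeneousComponent lam g⟩
  · rw [weightedHomogeneousComponent_eq_zero _ _ hlt]
    exact Ideal.zero_mem _

theorem initIdeal_induction {I : Ideal (MvPolynomial (Fin n) R)}
    {P : MvPolynomial (Fin n) R → Prop}
    (component : ∀ g ∈ I, ∀ d, weightedTotalDegree lam g ≤ d →
      P (weightedHomogeneousComponent lam d g))
    (add : ∀ x y, P x → P y → P (x + y)) {x : MvPolynomial (Fin n) R}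
    (hx : x ∈ initIdeal lam I) : P x := by
  suffices hmul : ∀ r, P (r * x) by simpa only [one_mul] using hmul 1
  induction hx using Submodule.span_induction with
  | mem x hx =>
    obtain ⟨g, hg, -, rfl⟩ := hx
    rw [initForm_eq_weightedHomogeneousComponent]
    intro r
    induction r using MvPolynomial.induction_on' with
    | monomial m c =>
      have hm := isWeightedHomogeneous_monomial lam m c rfl
      have hm_le := weightedTotalDegree_le_of_isWeightedHomogeneous lam hm
      have hcomp := weightedHomogeneousComponent_add_mul lam hm_le
        (le_refl (weightedTotalDegree lam g))
      rw [hm.weightedHomogeneousComponent_same] at hcomp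
      exact hcomp ▸ component _ (I.mul_mem_left _ hg) _
        (weightedTotalDegree_mul_le lam hm_le le_rfl)
    | add a b ha hb => exact add_mul a b _ ▸ add _ _ ha hb
  | zero =>
    simpa only [mul_zero, map_zero] using
      fun _ ↦ component 0 I.zero_mem 0 (weightedTotalDegree_zero lam).le
  | add a b _ _ ha hb => exact fun r ↦ mul_add r a b ▸ add _ _ (ha r) (hb r)
  | smul a x _ hx => exact fun r ↦ by simpa only [smul_eq_mul, mul_assoc] using hx (r * a)

end InitialIdeal

section Trace

variable {p n : ℕ}

/-- The exponent vector of `x₁⋯xₙ`. -/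
noncomputable def ones (n : ℕ) : Fin n →₀ ℕ := Finsupp.equivFunOnFinite.symm fun _ ↦ 1

theorem ones_apply (i : Fin n) : ones n i = 1 := rfl

theorem monomial_ones_mul_Tr (g : MvPolynomial (Fin n) (ZMod p)) :
    monomial (ones n) 1 * Tr p n g = contract p (monomial (ones n) 1 * g) := by
  classical
  conv_rhs => rw [g.as_sum, Finset.mul_sum, map_sum]
  rw [Tr, Finset.mul_sum]
  refine Finset.sum_congr rfl fun m _ ↦ ?_
  rw [monomial_mul, contract_monomial, one_mul, mul_ite, mul_zero, monomial_mul, one_mul]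
  simp only [Finsupp.add_apply, ones_apply, add_comm 1]
  split_ifs with hdvd
  · congr 2
    ext i
    have hpos : 0 < (m i + 1) / p :=
      Nat.div_pos (Nat.le_of_dvd (Nat.succ_pos _) (hdvd i))
        (Nat.pos_of_dvd_of_pos (hdvd i) (Nat.succ_pos _))
    simp only [Finsupp.add_apply, ones_apply, Finsupp.mapRange_apply,
      Finsupp.equivFunOnFinite_symm_apply_apply, add_comm 1]
    exact Nat.sub_add_cancel hpos
  · rfl

theorem coeff_Tr (hp : p ≠ 0) (g : MvPolynomial (Fin n) (ZMod p)) (k : Fin n →₀ ℕ) :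
    coeff k (Tr p n g) = coeff ((p - 1) • ones n + p • k) g := by
  have hexp : p • (ones n + k) = ones n + ((p - 1) • ones n + p • k) := by
    obtain ⟨q, rfl⟩ := Nat.exists_eq_succ_of_ne_zero hp
    simp only [Nat.succ_eq_add_one, add_tsub_cancel_right]
    module
  calc coeff k (Tr p n g) = coeff (ones n + k) (monomial (ones n) 1 * Tr p n g) := by
        rw [coeff_monomial_mul, one_mul]
    _ = coeff (p • (ones n + k)) (monomial (ones n) 1 * g) := by
        rw [monomial_ones_mul_Tr, coeff_contract hp]
    _ = coeff ((p - 1) • ones n + p • k) g := by rw [hexp, coeff_monomial_mul, one_mul]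

theorem Tr_add (hp : p ≠ 0) (a b : MvPolynomial (Fin n) (ZMod p)) :
    Tr p n (a + b) = Tr p n a + Tr p n b := by
  ext k
  simp only [coeff_Tr hp, coeff_add]

theorem Tr_pow_mul (hp : p.Prime) (a b : MvPolynomial (Fin n) (ZMod p)) :
    Tr p n (a ^ p * b) = a * Tr p n b := by
  have := Fact.mk hp
  have hX : monomial (ones n) (1 : ZMod p) ≠ 0 := by simp
  apply mul_left_cancel₀ hX
  rw [monomial_ones_mul_Tr, mul_left_comm, (isFrobeniusSplitting_contract hp).2.1,
    ← monomial_ones_mul_Tr, mul_left_comm]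

theorem isFrobeniusSplitting_Tr_mul (hp : p.Prime) {h : MvPolynomial (Fin n) (ZMod p)}
    (hh : Tr p n h = 1) : IsFrobeniusSplitting p fun g ↦ Tr p n (h * g) := by
  refine ⟨fun a b ↦ ?_, fun a b ↦ ?_, ?_⟩
  · simp only [mul_add, Tr_add hp.ne_zero]
  · simp only [mul_left_comm h, Tr_pow_mul hp]
  · simp only [mul_one, hh]

theorem Tr_monomial_ones_mul (hp : p ≠ 0) (g : MvPolynomial (Fin n) (ZMod p)) :
    Tr p n (monomial ((p - 1) • ones n) 1 * g) = contract p g := by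
  ext k
  rw [coeff_Tr hp, coeff_contract hp, coeff_monomial_mul, one_mul]

theorem weightedTotalDegree_Tr_le (lam : Fin n → ℕ) (hp : p ≠ 0)
    {g : MvPolynomial (Fin n) (ZMod p)} {d : ℕ}
    (hg : weightedTotalDegree lam g ≤ (p - 1) * Finsupp.weight lam (ones n) + p * d) :
    weightedTotalDegree lam (Tr p n g) ≤ d := by
  refine Finset.sup_le fun k hk ↦ ?_
  rw [mem_support_iff, coeff_Tr hp] at hk
  have hk_le := (le_weightedTotalDegree lam (mem_support_iff.mpr hk)).trans hg
  simp only [map_add, map_nsmul, smul_eq_mul] at hk_le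
  rw [add_le_add_iff_left] at hk_le
  exact le_of_mul_le_mul_left hk_le (Nat.pos_of_ne_zero hp)

theorem weightedHomogeneousComponent_Tr (lam : Fin n → ℕ) (hp : p ≠ 0)
    (g : MvPolynomial (Fin n) (ZMod p)) (d : ℕ) :
    weightedHomogeneousComponent lam d (Tr p n g) =
      Tr p n (weightedHomogeneousComponent lam
        ((p - 1) * Finsupp.weight lam (ones n) + p * d) g) := by
  ext k
  simp only [coeff_weightedHomogeneousComponent, coeff_Tr hp, map_add, map_nsmul, smul_eq_mul,
    add_right_inj, mul_right_inj' hp]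

end Trace

section Degeneration

variable {p n : ℕ} {lam : Fin n → ℕ} {f : MvPolynomial (Fin n) (ZMod p)} {c : ZMod p}

theorem weightedTotalDegree_pow_mul_le (hc : c ≠ 0) (hf : initForm lam f = monomial (ones n) c)
    {g : MvPolynomial (Fin n) (ZMod p)} {d : ℕ} (hg : weightedTotalDegree lam g ≤ p * d) :
    weightedTotalDegree lam (f ^ (p - 1) * g) ≤
      (p - 1) * Finsupp.weight lam (ones n) + p * d :=
  weightedTotalDegree_mul_le lam (weightedTotalDegree_pow_le lam
    (weightedTotalDegree_eq_of_initForm_eq_monomial hc hf).le (p - 1)) hg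

theorem weightedHomogeneousComponent_Tr_pow_mul (hp : p.Prime) (hc : c ≠ 0)
    (hf : initForm lam f = monomial (ones n) c)
    {g : MvPolynomial (Fin n) (ZMod p)} {d : ℕ} (hg : weightedTotalDegree lam g ≤ p * d) :
    weightedHomogeneousComponent lam d (Tr p n (f ^ (p - 1) * g)) =
      weightedHomogeneousComponent lam d (contract p g) := by
  have := Fact.mk hp
  set N := Finsupp.weight lam (ones n)
  have hdeg : weightedTotalDegree lam f = N :=
    weightedTotalDegree_eq_of_initForm_eq_monomial hc hf
  have hpow : weightedHomogeneousComponent lam ((p - 1) * N) (f ^ (p - 1)) =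
      monomial ((p - 1) • ones n) 1 := by
    rw [← smul_eq_mul, weightedHomogeneousComponent_nsmul_pow lam hdeg.le, ← hdeg,
      ← initForm_eq_weightedHomogeneousComponent, hf, monomial_pow, ZMod.pow_card_sub_one_eq_one hc]
  calc weightedHomogeneousComponent lam d (Tr p n (f ^ (p - 1) * g))
      = Tr p n (weightedHomogeneousComponent lam ((p - 1) * N + p * d) (f ^ (p - 1) * g)) :=
        weightedHomogeneousComponent_Tr lam hp.ne_zero _ d
    _ = Tr p n (monomial ((p - 1) • ones n) 1 * weightedHomogeneousComponent lam (p * d) g) := by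
        rw [weightedHomogeneousComponent_add_mul lam (a := (p - 1) * N)
          (weightedTotalDegree_pow_le lam hdeg.le (p - 1)) hg, hpow]
    _ = weightedHomogeneousComponent lam d (contract p g) := by
        rw [Tr_monomial_ones_mul hp.ne_zero, weightedHomogeneousComponent_contract lam hp.ne_zero]

theorem Tr_pow_eq_one (hp : p.Prime) (hc : c ≠ 0) (hf : initForm lam f = monomial (ones n) c) :
    Tr p n (f ^ (p - 1)) = 1 := by
  have hdeg (d : ℕ) : weightedTotalDegree lam (1 : MvPolynomial (Fin n) (ZMod p)) ≤ p * d :=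
    (weightedTotalDegree_le_of_isWeightedHomogeneous lam (isWeightedHomogeneous_one _ lam)).trans
      (Nat.zero_le _)
  rw [← sum_weightedHomogeneousComponent lam (Tr p n _), ← sum_weightedHomogeneousComponent lam 1]
  refine finsum_congr fun d ↦ ?_
  simpa only [mul_one, contract_one] using
    weightedHomogeneousComponent_Tr_pow_mul hp hc hf (hdeg d)

theorem contract_mem_initIdeal (hp : p.Prime) (hc : c ≠ 0)
    (hf : initForm lam f = monomial (ones n) c) {I : Ideal (MvPolynomial (Fin n) (ZMod p))}
    (hI : ∀ g ∈ I, Tr p n (f ^ (p - 1) * g) ∈ I) {x : MvPolynomial (Fin n) (ZMod p)}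
    (hx : x ∈ initIdeal lam I) : contract p x ∈ initIdeal lam I := by
  refine initIdeal_induction (P := fun x ↦ contract p x ∈ initIdeal lam I)
    (fun g hg d hd ↦ ?_) (fun x y hx hy ↦ ?_) hx
  · by_cases hpd : p ∣ d
    · obtain ⟨d, rfl⟩ := hpd
      rw [← weightedHomogeneousComponent_contract lam hp.ne_zero,
        ← weightedHomogeneousComponent_Tr_pow_mul hp hc hf hd]
      exact weightedHomogeneousComponent_mem_initIdeal (hI g hg)
        (weightedTotalDegree_Tr_le lam hp.ne_zero (weightedTotalDegree_pow_mul_le hc hf hd))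
    · rw [contract_eq_zero_of_not_dvd lam hp.ne_zero hpd
        (weightedHomogeneousComponent_isWeightedHomogeneous d g)]
      exact Ideal.zero_mem _
  · rw [map_add]
    exact Ideal.add_mem _ hx hy

end Degeneration

theorem stmt_18_general {p : ℕ} (hp : p.Prime) {n : ℕ} {lam : Fin n → ℕ}
    {f : MvPolynomial (Fin n) (ZMod p)} {c : ZMod p} (hc : c ≠ 0)
    (hf : initForm lam f = monomial (ones n) c) {I : Ideal (MvPolynomial (Fin n) (ZMod p))}
    (hI : ∀ g ∈ I, Tr p n (f ^ (p - 1) * g) ∈ I) :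
    IsSqfreeMonomialIdeal (initIdeal lam I) ∧ (initIdeal lam I).IsRadical ∧ I.IsRadical := by
  have := Fact.mk hp
  have hinit : ∀ g ∈ initIdeal lam I, contract p g ∈ initIdeal lam I :=
    fun g hg ↦ contract_mem_initIdeal hp hc hf hI hg
  refine ⟨?_, ?_, ?_⟩
  · exact isSqfreeMonomialIdeal_of_prod_X_support_mem fun g hg m hm ↦
      prod_X_support_mem_of_contract_mem hp.one_lt hinit hg hm
  · exact (isFrobeniusSplitting_contract hp).isRadical hp.one_lt hinit
  · exact (isFrobeniusSplitting_Tr_mul hp (Tr_pow_eq_one hp hc hf)).isRadical hp.one_lt hI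

/-- if `deg f ≤ n` and, for some weighting `λ`, the unique term of `f` of
maximal `λ`-weight is `c·x₁⋯xₙ` with `c ≠ 0`, and `I` is compatibly split by
`g ↦ Tr(f^{p−1}·g)`, then `init_λ(I)` is a squarefree monomial (Stanley–Reisner) ideal;
in particular `init_λ(I)` and `I` are radical. -/
theorem stmt_18 {p : ℕ} (hp : p.Prime) {n : ℕ} (hn : 1 ≤ n) (lam : Fin n → ℕ)
    (f : MvPolynomial (Fin n) (ZMod p)) (hdeg : f.totalDegree ≤ n)
    (hmem : (Finsupp.equivFunOnFinite.symm fun _ : Fin n => 1) ∈ f.support)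
    (huniq : ∀ m ∈ f.support, m ≠ (Finsupp.equivFunOnFinite.symm fun _ : Fin n => 1) →
      wtOf lam m < wtOf lam (Finsupp.equivFunOnFinite.symm fun _ : Fin n => 1))
    (I : Ideal (MvPolynomial (Fin n) (ZMod p)))
    (hI : ∀ g ∈ I, Tr p n (f ^ (p - 1) * g) ∈ I) :
    IsSqfreeMonomialIdeal (initIdeal lam I) ∧
      (initIdeal lam I).IsRadical ∧ I.IsRadical :=
  stmt_18_general hp (mem_support_iff.mp hmem) (initForm_eq_monomial hmem huniq) hI
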